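/- Let n be a positive natural number, U a real n × n matrix, and b : Fin n → ℝ. Define Φ : (Fin n → ℝ) → (Fin n → ℝ) by Φ(u)(i) = σ((U · u + b)(i)) · tanh(u(i)), where σ(x) = 1/(1 + exp(−x)). Let u : ℕ → (Fin n → ℝ) be a trajectory, u_{t+1} = Φ(u_t), and suppose C > 0 is such that (U · u_t + b)(i) < C for all t and all i. Then |u_{t+1}(i)| ≤ σ(C) · |u_t(i)| for all t and all components i, and 0 < σ(C) < 1. -/

import Mathlib

theorem hasDerivAt_tanh (x : ℝ) : HasDerivAt Real.tanh (1 / Real.cosh x ^ 2) x := by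
  have hquot := (Real.hasDerivAt_sinh x).div (Real.hasDerivAt_cosh x) (Real.cosh_pos x).ne'
  rw [← sq, ← sq, Real.cosh_sq_sub_sinh_sq] at hquot
  exact hquot.congr_of_eventuallyEq (.of_forall Real.tanh_eq_sinh_div_cosh)

theorem lipschitzWith_one_tanh : LipschitzWith 1 Real.tanh := by
  refine lipschitzWith_of_nnnorm_deriv_le (fun x ↦ (hasDerivAt_tanh x).differentiableAt) fun x ↦ ?_
  have hderiv_le : 1 / Real.cosh x ^ 2 ≤ 1 :=
    div_le_one_of_le₀ (one_le_pow₀ (Real.one_le_cosh x)) (sq_nonneg _)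
  rwa [(hasDerivAt_tanh x).deriv, ← NNReal.coe_le_coe, coe_nnnorm,
    Real.norm_of_nonneg (by positivity)]

theorem abs_tanh_le_abs (x : ℝ) : |Real.tanh x| ≤ |x| := by
  simpa using lipschitzWith_one_tanh.norm_sub_le x 0

theorem abs_sigmoid_mul_tanh_le {a C : ℝ} (ha : a ≤ C) (x : ℝ) :
    |Real.sigmoid a * Real.tanh x| ≤ Real.sigmoid C * |x| := by
  rw [abs_mul, abs_of_pos (Real.sigmoid_pos a)]
  exact mul_le_mul (Real.sigmoid_le ha) (abs_tanh_le_abs x) (abs_nonneg _) (Real.sigmoid_nonneg C)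

theorem cfn_per_step_contraction_general {ι : Type*} (a u : ℕ → ι → ℝ)
    (hu : ∀ t i, u (t + 1) i = Real.sigmoid (a t i) * Real.tanh (u t i))
    (C : ℝ) (hbound : ∀ t i, a t i ≤ C) :
    (∀ t i, |u (t + 1) i| ≤ Real.sigmoid C * |u t i|) ∧
      0 < Real.sigmoid C ∧ Real.sigmoid C < 1 :=
  ⟨fun t i ↦ hu t i ▸ abs_sigmoid_mul_tanh_le (hbound t i) (u t i),
    Real.sigmoid_pos C, Real.sigmoid_lt_one C⟩

/-- Per-step contraction estimate from the proof of Lemma 2 of the paper: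
along a trajectory `u (t+1) = Φ (u t)` of the CFN-induced dynamical system
`Φ(u)(i) = σ((U·u + b)(i)) * tanh(u(i))`, if `C > 0` bounds every component of
the sigmoid argument, i.e. `(U·u_t + b)(i) < C` for all `t, i`, then
`|u_{t+1}(i)| ≤ σ(C) * |u_t(i)|` for all `t, i`, and `0 < σ(C) < 1`. -/
theorem cfn_per_step_contraction (n : ℕ) (hn : 0 < n)
    (U : Matrix (Fin n) (Fin n) ℝ) (b : Fin n → ℝ)
    (Φ : (Fin n → ℝ) → (Fin n → ℝ))
    (hΦ : ∀ u i, Φ u i = (1 / (1 + Real.exp (-(U.mulVec u + b) i))) * Real.tanh (u i))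
    (u : ℕ → (Fin n → ℝ))
    (hu : ∀ t, u (t + 1) = Φ (u t))
    (C : ℝ) (hC : 0 < C)
    (hbound : ∀ t i, (U.mulVec (u t) + b) i < C) :
    (∀ t i, |u (t + 1) i| ≤ (1 / (1 + Real.exp (-C))) * |u t i|) ∧
      0 < 1 / (1 + Real.exp (-C)) ∧ 1 / (1 + Real.exp (-C)) < 1 := by
  simp only [one_div, ← Real.sigmoid_def] at hΦ ⊢
  exact cfn_per_step_contraction_general (fun t ↦ U.mulVec (u t) + b) u
    (fun t i ↦ by rw [hu, hΦ]) C fun t i ↦ (hbound t i).le
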